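/- Let m ≡ 0 (mod 4), and let e be an integer with 2 ≤ e ≤ ⌊m/2⌋ and gcd(m,e) = 2. Then the supports of the codewords of Hamming weight 8 in the extended code C̄_E form a 2-(2^m, 8, λ) design with λ = (2^{4m−4} − 27·2^{3m−4} + 23·2^{2m−1} + 261·2^{m−2} + 403)/45: every 2-element subset of the 2^m coordinate positions is contained in the support of exactly this number λ of codewords of Hamming weight 8 of C̄_E. -/

import Mathlib

open Polynomial Finset

/-- The polynomial `c₀ + c₁x + ⋯ + c_{n−1}x^{n−1}` associated to a vector. -/
noncomputable def codePoly {n : ℕ} (c : Fin n → ZMod 2) : Polynomial (ZMod 2) :=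
  ∑ i : Fin n, Polynomial.C (c i) * Polynomial.X ^ (i : ℕ)

/-- The generator polynomial `g_E(x) = M_α(x) · M_{α^{1+2^e}}(x)`. -/
noncomputable def gE (m e : ℕ) (α : GaloisField 2 m) : Polynomial (ZMod 2) :=
  minpoly (ZMod 2) α * minpoly (ZMod 2) (α ^ (1 + 2 ^ e))

/-- The binary cyclic code `C_E` of length `2^m − 1` with generator polynomial `g_E`. -/
def CE (m e : ℕ) (α : GaloisField 2 m) : Set (Fin (2 ^ m - 1) → ZMod 2) :=
  {c | gE m e α ∣ codePoly c}

/-- The extended code `C̄_E ⊆ F_2^{2^m}`: the first `2^m − 1` coordinates form a codeword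
of `C_E` and all `2^m` coordinates sum to zero. -/
def CEbar (m e : ℕ) (α : GaloisField 2 m) : Set (Fin (2 ^ m) → ZMod 2) :=
  {c | (fun i : Fin (2 ^ m - 1) => c (Fin.castLE (Nat.sub_le _ _) i)) ∈ CE m e α ∧
       ∑ i, c i = 0}

/-!
Label the coordinates by the points of `F = GaloisField 2 m`. The words of weight eight become the
eight-element sets `S` with `∑ x = 0` and `∑ x ^ (1 + 2 ^ e) = 0`. This family is invariant under
the affine group, which is doubly transitive, so it is a 2-design and only its size is needed.

By character orthogonality the size is the mean over `a, b` of the eighth elementary symmetric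
function of the signs `(-1) ^ Tr (a x + b x ^ (1 + 2 ^ e))`. For signs this is a polynomial in their
sum `s`, so the even power moments of `s` suffice. The square of `s` is `0` or `|F| |K b|`, where
`K b` is the radical of the quadratic form, and `∑ s ^ 2 = |F| ^ 2` over `a`; so the moments depend
only on the sizes of the radicals. For `b ≠ 0` the radical has `1` or `q ^ 2` elements, with
`q = 2 ^ gcd m e`, and counting pairs `(b, z)` with `z ∈ K b` tells how often each size occurs.
-/

section SymmetricFunctions

variable {R : Type*} [CommSemiring R]

lemma esymm_zero (s : Multiset R) : s.esymm 0 = 1 := by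
  simp [Multiset.esymm]

lemma esymm_empty_succ (k : ℕ) : (0 : Multiset R).esymm (k + 1) = 0 := by
  rw [Multiset.esymm, Multiset.powersetCard_zero_right, Multiset.map_zero, Multiset.sum_zero]

lemma esymm_one (s : Multiset R) : s.esymm 1 = s.sum := by
  simp [Multiset.esymm, Multiset.powersetCard_one]

lemma esymm_cons (a : R) (s : Multiset R) (k : ℕ) :
    (a ::ₘ s).esymm (k + 1) = s.esymm (k + 1) + a * s.esymm k := by
  simp [Multiset.esymm, Multiset.sum_map_mul_left]

end SymmetricFunctions

section SignVectors

variable {R : Type*} [CommRing R]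

/- With `G = ∏ (1 + aᵢ t)`, this is the coefficient form of `(1 - t²) G' = (∑ aᵢ - n t) G`. -/
lemma sum_mul_esymm_of_mul_self_eq_one {s : Multiset R} (hs : ∀ a ∈ s, a * a = 1) (k : ℕ) :
    s.sum * s.esymm (k + 1) =
      (k + 2) * s.esymm (k + 2) + (s.card - k) * s.esymm k := by
  induction s using Multiset.induction_on generalizing k with
  | empty => cases k <;> simp [esymm_empty_succ]
  | cons a s ih =>
    have ha : a * a = 1 := hs a (Multiset.mem_cons_self a s)
    replace ih := ih fun b hb => hs b (Multiset.mem_cons_of_mem hb)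
    simp only [Multiset.sum_cons, Multiset.card_cons, Nat.cast_succ]
    cases k with
    | zero =>
      have h := ih 0
      simp only [esymm_cons, zero_add, esymm_zero, esymm_one, Multiset.sum_cons,
        Nat.cast_zero] at h ⊢
      linear_combination h + ha
    | succ k =>
      have h := ih (k + 1)
      simp only [esymm_cons, Nat.cast_succ] at h ⊢
      linear_combination h + a * ih k + s.esymm (k + 1) * ha

/- This is `8!` times the Krawtchouk polynomial of degree eight, written in terms of the sum. -/
lemma esymm_eight_of_mul_self_eq_one {s : Multiset R} (hs : ∀ a ∈ s, a * a = 1) {n : R}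
    (hn : s.card = n) :
    40320 * s.esymm 8 = (s.sum ^ 2) ^ 4 + (112 - 28 * n) * (s.sum ^ 2) ^ 3
      + (2464 - 1540 * n + 210 * n ^ 2) * (s.sum ^ 2) ^ 2
      + (8448 - 11872 * n + 4200 * n ^ 2 - 420 * n ^ 3) * s.sum ^ 2
      + (-5040 * n + 4620 * n ^ 2 - 1260 * n ^ 3 + 105 * n ^ 4) := by
  have recurrence := sum_mul_esymm_of_mul_self_eq_one hs
  simp only [hn] at recurrence
  have h₂ := recurrence 0
  have h₃ := recurrence 1
  have h₄ := recurrence 2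
  have h₅ := recurrence 3
  have h₆ := recurrence 4
  have h₇ := recurrence 5
  have h₈ := recurrence 6
  simp only [Nat.reduceAdd, esymm_zero, esymm_one] at h₂ h₃ h₄ h₅ h₆ h₇ h₈
  push_cast at h₂ h₃ h₄ h₅ h₆ h₇ h₈
  set t := s.sum
  have e₂ : 2 * s.esymm 2 = t ^ 2 - n := by linear_combination -h₂
  have e₃ : 6 * s.esymm 3 = t * (2 * s.esymm 2) - 2 * (n - 1) * t := by
    linear_combination -2 * h₃
  have e₄ : 24 * s.esymm 4 = t * (6 * s.esymm 3) - 3 * (n - 2) * (2 * s.esymm 2) := by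
    linear_combination -6 * h₄
  have e₅ : 120 * s.esymm 5 = t * (24 * s.esymm 4) - 4 * (n - 3) * (6 * s.esymm 3) := by
    linear_combination -24 * h₅
  have e₆ : 720 * s.esymm 6 = t * (120 * s.esymm 5) - 5 * (n - 4) * (24 * s.esymm 4) := by
    linear_combination -120 * h₆
  have e₇ : 5040 * s.esymm 7 = t * (720 * s.esymm 6) - 6 * (n - 5) * (120 * s.esymm 5) := by
    linear_combination -720 * h₇
  have e₈ : 40320 * s.esymm 8 = t * (5040 * s.esymm 7) - 7 * (n - 6) * (720 * s.esymm 6) := by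
    linear_combination -5040 * h₈
  rw [e₈, e₇, e₆, e₅, e₄, e₃, e₂]
  ring

end SignVectors

section TraceSign

variable (F : Type*) [Field F] [Algebra (ZMod 2) F]

/-- The canonical additive character `x ↦ (-1) ^ Tr x` of a field of characteristic two, with
values in `ℤ` so that the exponential sums below are integers. -/
noncomputable def traceSign : AddChar F ℤ :=
  (AddChar.zmodChar 2 (neg_one_sq (R := ℤ))).compAddMonoidHom
    (Algebra.trace (ZMod 2) F).toAddMonoidHom

lemma traceSign_isPrimitive [Finite F] : (traceSign F).IsPrimitive := by
  intro a ha h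
  refine ha ((traceForm_nondegenerate (ZMod 2) F).1 a fun x => ?_)
  have hx : (-1 : ℤ) ^ (Algebra.trace (ZMod 2) F (a * x)).val = 1 := DFunLike.congr_fun h x
  rw [Algebra.traceForm_apply]
  generalize Algebra.trace (ZMod 2) F (a * x) = t at hx
  revert t
  decide

lemma traceSign_ringEquiv (σ : F ≃+* F) (x : F) : traceSign F (σ x) = traceSign F x := by
  have hσ : (σ : F →+* F).comp (algebraMap (ZMod 2) F) = algebraMap (ZMod 2) F :=
    Subsingleton.elim _ _
  exact congrArg (AddChar.zmodChar 2 (neg_one_sq (R := ℤ))) <|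
    Algebra.trace_eq_of_algEquiv (AlgEquiv.ofRingEquiv (f := σ) (RingHom.congr_fun hσ)) x

end TraceSign

section QuadraticSums

lemma addChar_mul_self_of_charTwo {A R : Type*} [Ring A] [CharP A 2] [Monoid R]
    (ψ : AddChar A R) (x : A) : ψ x * ψ x = 1 := by
  rw [← AddChar.map_add_eq_mul, CharTwo.add_self_eq_zero, AddChar.map_zero_eq_one]

variable {R : Type*} [CommRing R]

/-- The quadratic form whose exponential sums are the Walsh coefficients of the dual code. For
`σ x = x ^ 2 ^ e` it reads `a x + b x ^ (1 + 2 ^ e)`. -/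
def quadPhase (σ : R ≃+* R) (a b x : R) : R :=
  a * x + b * (x * σ x)

/-- The radical of the bilinear form polarizing `quadPhase σ a b`; it does not depend on `a`. -/
def radical (σ : R ≃+* R) (b : R) : AddSubgroup R :=
  (AddMonoidHom.mulLeft b +
    (AddMonoidHom.mulLeft (σ b)).comp (σ.trans σ).toAddEquiv.toAddMonoidHom).ker

lemma mem_radical {σ : R ≃+* R} {b z : R} :
    z ∈ radical σ b ↔ b * z + σ b * σ (σ z) = 0 := Iff.rfl

instance radical.decidableMem [DecidableEq R] (σ : R ≃+* R) (b : R) :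
    DecidablePred (· ∈ radical σ b) :=
  fun _ => decidable_of_iff _ mem_radical.symm

variable {ψ : AddChar R ℤ} {σ : R ≃+* R}

lemma addChar_quadPhase_add (hσ : ∀ x, ψ (σ x) = ψ x) (a b x z : R) :
    ψ (quadPhase σ a b (x + z)) =
      ψ (quadPhase σ a b x) * ψ (quadPhase σ a b z) * ψ (σ x * (b * z + σ b * σ (σ z))) := by
  have polar : ψ (σ x * (b * z + σ b * σ (σ z))) = ψ (b * z * σ x) * ψ (b * x * σ z) := by
    rw [← hσ (b * x * σ z), ← AddChar.map_add_eq_mul]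
    congr 1
    simp only [map_mul]
    ring
  rw [polar]
  simp only [← AddChar.map_add_eq_mul, quadPhase, map_add]
  congr 1
  ring

variable [Fintype R]

/-- The exponential sum of `quadPhase σ a b` with respect to the additive character `ψ`. -/
def quadSum (ψ : AddChar R ℤ) (σ : R ≃+* R) (a b : R) : ℤ :=
  ∑ x, ψ (quadPhase σ a b x)

lemma quadSum_sq [DecidableEq R] [CharP R 2] (hψ : ψ.IsPrimitive) (hσ : ∀ x, ψ (σ x) = ψ x)
    (a b : R) :
    quadSum ψ σ a b ^ 2 =
      Fintype.card R * ∑ z : radical σ b, ψ (quadPhase σ a b z) := by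
  calc quadSum ψ σ a b ^ 2
      = ∑ x, ∑ z, ψ (quadPhase σ a b x) * ψ (quadPhase σ a b (x + z)) := by
        rw [sq, quadSum, sum_mul]
        refine sum_congr rfl fun x _ => ?_
        rw [mul_sum]
        exact (Equiv.sum_comp (Equiv.addLeft x) _).symm
    _ = ∑ z, ψ (quadPhase σ a b z) * ∑ x, ψ (σ x * (b * z + σ b * σ (σ z))) := by
        rw [sum_comm]
        simp_rw [mul_sum, addChar_quadPhase_add hσ, ← mul_assoc, addChar_mul_self_of_charTwo,
          one_mul]
    _ = ∑ z, if z ∈ radical σ b then Fintype.card R * ψ (quadPhase σ a b z) else 0 := by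
        refine sum_congr rfl fun z _ => ?_
        have reindex (c : R) : ∑ x, ψ (σ x * c) = ∑ y, ψ (y * c) :=
          σ.toEquiv.sum_comp fun y => ψ (y * c)
        rw [reindex, AddChar.sum_mulShift _ hψ]
        simp only [mem_radical]
        split_ifs <;> ring
    _ = Fintype.card R * ∑ z : radical σ b, ψ (quadPhase σ a b z) := by
        rw [← sum_filter, ← mul_sum]
        congr 1
        exact sum_subtype _ (by simp) _

lemma sq_sum_radical [DecidableEq R] (hσ : ∀ x, ψ (σ x) = ψ x) (a b : R) :
    (∑ z : radical σ b, ψ (quadPhase σ a b z)) ^ 2 =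
      Nat.card (radical σ b) * ∑ z : radical σ b, ψ (quadPhase σ a b z) := by
  classical
  let χ : AddChar (radical σ b) ℤ :=
    { toFun := fun z => ψ (quadPhase σ a b z)
      map_zero_eq_one' := by simp [quadPhase]
      map_add_eq_mul' := fun x z => by
        rw [AddSubgroup.coe_add, addChar_quadPhase_add hσ, mem_radical.1 z.2]
        simp }
  change (∑ z, χ z) ^ 2 = _ * ∑ z, χ z
  rw [AddChar.sum_eq_ite, Nat.card_eq_fintype_card]
  split_ifs <;> ring

lemma sq_quadSum_sq [CharP R 2] (hψ : ψ.IsPrimitive) (hσ : ∀ x, ψ (σ x) = ψ x) (a b : R) :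
    (quadSum ψ σ a b ^ 2) ^ 2 =
      Nat.card (radical σ b) * Fintype.card R * quadSum ψ σ a b ^ 2 := by
  classical
  rw [quadSum_sq hψ hσ, mul_pow, sq_sum_radical hσ]
  ring

/- Parseval's identity, since `a ↦ quadSum ψ σ a b` is the Fourier transform of a `±1` function. -/
lemma sum_quadSum_sq [CharP R 2] (hψ : ψ.IsPrimitive) (hσ : ∀ x, ψ (σ x) = ψ x) (b : R) :
    ∑ a, quadSum ψ σ a b ^ 2 = (Fintype.card R : ℤ) ^ 2 := by
  classical
  have orthogonality (z : radical σ b) : ∑ a, ψ (quadPhase σ a b z) =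
      if z = 0 then (Fintype.card R : ℤ) else 0 := by
    simp_rw [quadPhase, AddChar.map_add_eq_mul, ← sum_mul, AddChar.sum_mulShift _ hψ,
      ZeroMemClass.coe_eq_zero]
    split_ifs with h <;> simp [h]
  simp_rw [quadSum_sq hψ hσ, ← mul_sum]
  rw [sum_comm]
  simp_rw [orthogonality]
  simp [sq]

lemma sum_quadSum_sq_pow [CharP R 2] (hψ : ψ.IsPrimitive) (hσ : ∀ x, ψ (σ x) = ψ x) (b : R)
    (k : ℕ) :
    ∑ a, (quadSum ψ σ a b ^ 2) ^ (k + 1) =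
      (Nat.card (radical σ b) * Fintype.card R : ℤ) ^ k * Fintype.card R ^ 2 := by
  induction k with
  | zero => simpa using sum_quadSum_sq hψ hσ b
  | succ k ih =>
    rw [pow_succ' _ k, mul_assoc, ← ih, mul_sum]
    refine sum_congr rfl fun a _ => ?_
    rw [pow_succ, pow_succ, mul_assoc, ← sq, sq_quadSum_sq hψ hσ]
    ring

end QuadraticSums

section RadicalSizes

open Function

variable {F : Type*} [Field F] (σ : F ≃+* F)

lemma radical_zero : radical σ 0 = ⊤ := by
  ext z
  simp [mem_radical]

lemma card_radical_eq_one_or_card_fixedPoints {b : F} (hb : b ≠ 0) :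
    Nat.card (radical σ b) = 1 ∨
      Nat.card (radical σ b) = Nat.card (fixedPoints (σ.trans σ)) := by
  rcases (radical σ b).bot_or_exists_ne_zero with h | ⟨z, hz, hz0⟩
  · left
    rw [h, AddSubgroup.card_bot]
  · right
    refine Nat.card_congr ((Equiv.mulRight₀ z hz0).subtypeEquiv fun w => ?_).symm
    have factor : b * (w * z) + σ b * σ (σ (w * z)) = b * z * (w - σ (σ w)) := by
      simp only [map_mul]
      linear_combination σ (σ w) * mem_radical.1 hz
    change σ (σ w) = w ↔ b * (w * z) + σ b * σ (σ (w * z)) = 0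
    rw [factor, mul_eq_zero_iff_left (mul_ne_zero hb hz0), sub_eq_zero, eq_comm]

lemma card_setOf_mem_radical [CharP F 2] {z : F} (hz : z ≠ 0) :
    Nat.card {b // z ∈ radical σ b} = Nat.card (fixedPoints σ) := by
  have hσz : σ z ≠ 0 := (map_ne_zero σ).2 hz
  refine Nat.card_congr ((Equiv.mulRight₀ (z * σ z) (mul_ne_zero hz hσz)).subtypeEquiv fun b => ?_)
  have factor : b * (z * σ z) + σ (b * (z * σ z)) = σ z * (b * z + σ b * σ (σ z)) := by
    simp only [map_mul]
    ring
  change b * z + σ b * σ (σ z) = 0 ↔ σ (b * (z * σ z)) = b * (z * σ z)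
  rw [← mul_eq_zero_iff_left hσz, ← factor, CharTwo.add_eq_zero, eq_comm]

lemma sum_card_radical [Fintype F] [CharP F 2] :
    ∑ b, (Nat.card (radical σ b) : ℤ) =
      Fintype.card F + (Fintype.card F - 1) * Nat.card (fixedPoints σ) := by
  classical
  have double_count : ∑ b, Nat.card (radical σ b) = ∑ z, Nat.card {b // z ∈ radical σ b} := by
    simp only [Nat.card_eq_fintype_card, Fintype.card_subtype]
    exact sum_card_bipartiteAbove_eq_sum_card_bipartiteBelow fun b z => z ∈ radical σ b
  have card_zero : Nat.card {b // (0 : F) ∈ radical σ b} = Fintype.card F := by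
    simp
  have card_ne_zero (z : F) (hz : z ∈ univ.erase 0) :
      Nat.card {b // z ∈ radical σ b} = Nat.card (fixedPoints σ) :=
    card_setOf_mem_radical σ (ne_of_mem_erase hz)
  rw [← Nat.cast_sum, double_count, ← add_sum_erase _ _ (mem_univ 0), card_zero,
    sum_congr rfl card_ne_zero, sum_const, card_erase_of_mem (mem_univ _), card_univ, smul_eq_mul,
    Nat.cast_add, Nat.cast_mul, Nat.cast_pred Fintype.card_pos]

variable {σ} in
lemma sum_card_radical_pow [Fintype F] [CharP F 2]
    (hq : Nat.card (fixedPoints (σ.trans σ)) = Nat.card (fixedPoints σ) ^ 2) (k : ℕ) :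
    ((Nat.card (fixedPoints σ) : ℤ) + 1) * ∑ b, (Nat.card (radical σ b) : ℤ) ^ k =
      (Nat.card (fixedPoints σ) + 1) * Fintype.card F ^ k + (Fintype.card F - 1) *
        ((Nat.card (fixedPoints σ) : ℤ) ^ (2 * k) + Nat.card (fixedPoints σ)) := by
  classical
  set q := (Nat.card (fixedPoints σ) : ℤ) with hq_def
  have q_ne_one : q - 1 ≠ 0 := by
    have : Nontrivial (fixedPoints σ) :=
      ⟨⟨0, map_zero σ⟩, ⟨1, map_one σ⟩, fun h => zero_ne_one (congrArg Subtype.val h)⟩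
    have := Finite.one_lt_card (α := fixedPoints σ)
    omega
  -- The two possible sizes `1` and `q ^ 2` make `r ^ k` an affine function of `r`.
  have pow_affine (b : F) (hb : b ∈ univ.erase 0) :
      (q ^ 2 - 1) * (Nat.card (radical σ b) : ℤ) ^ k =
        (q ^ 2 - 1) + (q ^ (2 * k) - 1) * (Nat.card (radical σ b) - 1) := by
    rcases card_radical_eq_one_or_card_fixedPoints σ (ne_of_mem_erase hb) with h | h
    · rw [h, Nat.cast_one, one_pow]
      ring
    · rw [h, hq, Nat.cast_pow, ← hq_def]
      ring
  have card_top : (Nat.card (radical σ 0) : ℤ) = Fintype.card F := by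
    rw [radical_zero, AddSubgroup.card_top, Nat.card_eq_fintype_card]
  have sum_card := sum_card_radical σ
  rw [← add_sum_erase _ _ (mem_univ (0 : F)), card_top, ← hq_def] at sum_card
  have card_erase : (#(univ.erase (0 : F)) : ℤ) = Fintype.card F - 1 := by
    rw [card_erase_of_mem (mem_univ _), card_univ, Nat.cast_pred Fintype.card_pos]
  have sum_affine := sum_congr rfl pow_affine
  simp only [← mul_sum, sum_add_distrib, sum_sub_distrib, sum_const, nsmul_eq_mul, card_erase,
    add_left_cancel sum_card] at sum_affine
  rw [← add_sum_erase _ _ (mem_univ (0 : F)), card_top]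
  refine mul_left_cancel₀ q_ne_one ?_
  linear_combination sum_affine

end RadicalSizes

lemma sum_offDiag_card_filter_mem {α : Type*} [Fintype α] [DecidableEq α]
    (𝓑 : Finset (Finset α)) :
    ∑ p ∈ univ.offDiag, #{S ∈ 𝓑 | p.1 ∈ S ∧ p.2 ∈ S} = ∑ S ∈ 𝓑, #S.offDiag := by
  have offDiag_eq (S : Finset α) :
      S.offDiag = univ.offDiag.filter fun p : α × α => p.1 ∈ S ∧ p.2 ∈ S := by
    ext p
    simp only [mem_offDiag, mem_filter, mem_univ, true_and]
    tauto
  rw [sum_congr rfl fun S _ => congrArg card (offDiag_eq S)]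
  exact sum_card_bipartiteAbove_eq_sum_card_bipartiteBelow
    fun (p : α × α) (S : Finset α) => p.1 ∈ S ∧ p.2 ∈ S

section Blocks

variable {F : Type*} [Field F] [Fintype F] [DecidableEq F]

/-- The sets of `k` points of `F` whose points `x` sum to zero and whose products `x * σ x` sum
to zero. For `σ x = x ^ 2 ^ e` they are the supports of the words of weight `k` of `CEbar`, once
the coordinates are labelled by the points of `F`. -/
def blocks (σ : F ≃+* F) (k : ℕ) : Finset (Finset F) :=
  {S ∈ univ.powersetCard k | ∑ x ∈ S, x = 0 ∧ ∑ x ∈ S, x * σ x = 0}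

/-- The members of `blocks σ k` that contain the points `u` and `v`. -/
def blocksThrough (σ : F ≃+* F) (k : ℕ) (u v : F) : Finset (Finset F) :=
  {S ∈ blocks σ k | u ∈ S ∧ v ∈ S}

variable {σ : F ≃+* F} {k : ℕ}

lemma mem_blocks {S : Finset F} :
    S ∈ blocks σ k ↔ #S = k ∧ ∑ x ∈ S, x = 0 ∧ ∑ x ∈ S, x * σ x = 0 := by
  simp [blocks]

lemma map_mem_blocks_of_affine [CharP F 2] (hk : Even k) {g : F ↪ F} {a b : F} (ha : a ≠ 0)
    (hg : ∀ x, g x = a * x + b) {S : Finset F} :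
    S.map g ∈ blocks σ k ↔ S ∈ blocks σ k := by
  simp only [mem_blocks, card_map, and_congr_right_iff]
  intro hS
  have const_sum (c : F) : ∑ _x ∈ S, c = 0 := by
    rw [sum_const, hS, nsmul_eq_mul, (CharP.cast_eq_zero_iff F 2 k).2 hk.two_dvd, zero_mul]
  have linear_sum : ∑ x ∈ S, (a * x + b) = a * ∑ x ∈ S, x := by
    rw [sum_add_distrib, const_sum, add_zero, mul_sum]
  have quadratic_sum : ∑ x ∈ S, (a * x + b) * σ (a * x + b) =
      a * σ a * ∑ x ∈ S, x * σ x + a * σ b * ∑ x ∈ S, x + b * σ a * σ (∑ x ∈ S, x) := by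
    rw [map_sum, mul_sum, mul_sum, mul_sum, ← sum_add_distrib, ← sum_add_distrib,
      ← add_zero (∑ x ∈ S, (_ + _)), ← const_sum (b * σ b), ← sum_add_distrib]
    refine sum_congr rfl fun x _ => ?_
    simp only [map_add, map_mul]
    ring
  have ha' : a * σ a ≠ 0 := mul_ne_zero ha ((map_ne_zero σ).2 ha)
  simp only [sum_map, hg, linear_sum, quadratic_sum, mul_eq_zero_iff_left ha]
  refine and_congr_right fun hX => ?_
  rw [hX, map_zero, mul_zero, mul_zero, add_zero, add_zero, mul_eq_zero_iff_left ha']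

lemma card_blocksThrough_eq_zero_one [CharP F 2] (hk : Even k) {u v : F} (huv : u ≠ v) :
    #(blocksThrough σ k u v) = #(blocksThrough σ k 0 1) := by
  have hvu : v - u ≠ 0 := sub_ne_zero.2 huv.symm
  let g : F ≃ F := (Equiv.mulLeft₀ (v - u) hvu).trans (Equiv.addRight u)
  have map_zero_mem (S : Finset F) : u ∈ S.map g.toEmbedding ↔ 0 ∈ S := by
    rw [show u = g.toEmbedding 0 by simp [g], mem_map']
  have map_one_mem (S : Finset F) : v ∈ S.map g.toEmbedding ↔ 1 ∈ S := by
    rw [show v = g.toEmbedding 1 by simp [g], mem_map']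
  refine (card_equiv g.finsetCongr fun S => ?_).symm
  rw [Equiv.finsetCongr_apply, blocksThrough, blocksThrough, mem_filter, mem_filter,
    map_zero_mem, map_one_mem, map_mem_blocks_of_affine hk hvu fun _ => rfl]

lemma card_blocksThrough_mul [CharP F 2] (hk : Even k) {u v : F} (huv : u ≠ v) :
    (Fintype.card F * Fintype.card F - Fintype.card F) * #(blocksThrough σ k u v) =
      (k * k - k) * #(blocks σ k) := by
  have through_const (p : F × F) (hp : p ∈ univ.offDiag) :
      #{S ∈ blocks σ k | p.1 ∈ S ∧ p.2 ∈ S} = #(blocksThrough σ k u v) := by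
    rw [card_blocksThrough_eq_zero_one hk huv,
      ← card_blocksThrough_eq_zero_one hk (mem_offDiag.1 hp).2.2]
    rfl
  have card_offDiag (S : Finset F) (hS : S ∈ blocks σ k) : #S.offDiag = k * k - k := by
    rw [offDiag_card, (mem_blocks.1 hS).1]
  have count := sum_offDiag_card_filter_mem (blocks σ k)
  rw [sum_congr rfl through_const, sum_congr rfl card_offDiag, sum_const, sum_const,
    offDiag_card, card_univ, smul_eq_mul, smul_eq_mul] at count
  rw [count, mul_comm]

end Blocks

lemma addChar_map_sum {ι A R : Type*} [AddCommMonoid A] [CommMonoid R] (ψ : AddChar A R)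
    (s : Finset ι) (f : ι → A) : ψ (∑ i ∈ s, f i) = ∏ i ∈ s, ψ (f i) :=
  map_prod ψ.toMonoidHom (fun i => Multiplicative.ofAdd (f i)) s

section BlockCount

open Function

variable {F : Type*} [Field F] [Fintype F] {ψ : AddChar F ℤ} {σ : F ≃+* F}

lemma sum_sum_quadSum_sq_pow [CharP F 2] (hψ : ψ.IsPrimitive) (hσ : ∀ x, ψ (σ x) = ψ x)
    (hq : Nat.card (fixedPoints (σ.trans σ)) = Nat.card (fixedPoints σ) ^ 2) (k : ℕ) :
    ((Nat.card (fixedPoints σ) : ℤ) + 1) * ∑ b, ∑ a, (quadSum ψ σ a b ^ 2) ^ (k + 1) =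
      (Fintype.card F : ℤ) ^ (k + 2) *
        ((Nat.card (fixedPoints σ) + 1) * Fintype.card F ^ k + (Fintype.card F - 1) *
          ((Nat.card (fixedPoints σ) : ℤ) ^ (2 * k) + Nat.card (fixedPoints σ))) := by
  simp_rw [sum_quadSum_sq_pow hψ hσ, mul_pow]
  rw [← sum_mul, ← sum_mul, ← sum_card_radical_pow hq]
  ring

variable [DecidableEq F]

lemma card_blocks_eq_sum_esymm (hψ : ψ.IsPrimitive) (k : ℕ) :
    (Fintype.card F : ℤ) ^ 2 * #(blocks σ k) =
      ∑ b, ∑ a, ((univ : Finset F).val.map fun x => ψ (quadPhase σ a b x)).esymm k := by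
  have prod_phase (a b : F) (S : Finset F) : ∏ x ∈ S, ψ (quadPhase σ a b x) =
      ψ (a * ∑ x ∈ S, x) * ψ (b * ∑ x ∈ S, x * σ x) := by
    rw [← addChar_map_sum, ← AddChar.map_add_eq_mul, mul_sum, mul_sum, ← sum_add_distrib]
    rfl
  have orthogonality (S : Finset F) : ∑ b, ∑ a, ∏ x ∈ S, ψ (quadPhase σ a b x) =
      if ∑ x ∈ S, x = 0 ∧ ∑ x ∈ S, x * σ x = 0 then (Fintype.card F : ℤ) ^ 2 else 0 := by
    simp_rw [prod_phase, ← sum_mul, ← mul_sum, AddChar.sum_mulShift _ hψ, ite_and]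
    split_ifs <;> simp [sq]
  calc (Fintype.card F : ℤ) ^ 2 * #(blocks σ k)
      = ∑ S ∈ univ.powersetCard k, ∑ b, ∑ a, ∏ x ∈ S, ψ (quadPhase σ a b x) := by
        simp_rw [orthogonality]
        rw [← sum_filter, sum_const, nsmul_eq_mul, mul_comm, blocks]
    _ = ∑ b, ∑ a, ∑ S ∈ univ.powersetCard k, ∏ x ∈ S, ψ (quadPhase σ a b x) := by
        rw [sum_comm]
        exact sum_congr rfl fun b _ => sum_comm
    _ = _ := by simp_rw [esymm_map_val]

/-- `720` times the number of blocks of size eight through two given points, for a field with `n`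
elements and an automorphism with `q` fixed points whose square has `q ^ 2` fixed points. The
alternating sums in `q` are the quotients `(q ^ (2 * k) + q) / (q + 1)` from the power moments. -/
def scaledLambda (n q : ℤ) : ℤ :=
  n ^ 4 - 27 * n ^ 3 - 20 * n ^ 2 + 1380 * n - 3408
    + n ^ 2 * q * (q ^ 4 - q ^ 3 + q ^ 2 - q + 1)
    + 28 * n * (4 - n) * q * (q ^ 2 - q + 1)
    + 14 * (15 * n ^ 2 - 110 * n + 176) * q

lemma scaledLambda_two_pow_four {m : ℕ} (hm : 4 ≤ m) :
    scaledLambda (2 ^ m) 4 =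
      16 * (2 ^ (4 * m - 4) - 27 * 2 ^ (3 * m - 4) + 23 * 2 ^ (2 * m - 1) + 261 * 2 ^ (m - 2)
        + 403) := by
  obtain ⟨j, rfl⟩ := Nat.exists_eq_add_of_le' hm
  rw [show 4 * (j + 4) - 4 = j * 4 + 12 by omega, show 3 * (j + 4) - 4 = j * 3 + 8 by omega,
    show 2 * (j + 4) - 1 = j * 2 + 7 by omega, show j + 4 - 2 = j + 2 by omega]
  simp only [scaledLambda, pow_add, pow_mul]
  ring

lemma card_blocks_eight [CharP F 2] (hψ : ψ.IsPrimitive) (hσ : ∀ x, ψ (σ x) = ψ x)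
    (hq : Nat.card (fixedPoints (σ.trans σ)) = Nat.card (fixedPoints σ) ^ 2) :
    40320 * (#(blocks σ 8) : ℤ) = Fintype.card F * (Fintype.card F - 1) *
      scaledLambda (Fintype.card F) (Nat.card (fixedPoints σ)) := by
  set n := (Fintype.card F : ℤ) with hn
  have sign_sq (a b : F) : ∀ t ∈ univ.val.map fun x => ψ (quadPhase σ a b x), t * t = 1 := by
    rw [Multiset.forall_mem_map_iff]
    exact fun x _ => addChar_mul_self_of_charTwo ψ _
  have esymm_eight (a b : F) :=
    esymm_eight_of_mul_self_eq_one (sign_sq a b) (n := n) (by simp [hn])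
  have expansion : 40320 * (n ^ 2 * #(blocks σ 8)) = ∑ b, ∑ a,
      40320 * ((univ : Finset F).val.map fun x => ψ (quadPhase σ a b x)).esymm 8 := by
    rw [card_blocks_eq_sum_esymm hψ]
    simp only [mul_sum]
  have sum_phase (a b : F) :
      (univ.val.map fun x => ψ (quadPhase σ a b x)).sum = quadSum ψ σ a b := rfl
  simp only [esymm_eight, sum_phase, sum_add_distrib, ← mul_sum, sum_const, card_univ,
    nsmul_eq_mul, ← hn] at expansion
  have moment := sum_sum_quadSum_sq_pow hψ hσ hq
  set q := (Nat.card (fixedPoints σ) : ℤ)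
  have n_ne_zero : n ≠ 0 := Nat.cast_ne_zero.2 Fintype.card_ne_zero
  have q_succ_ne_zero : q + 1 ≠ 0 := by positivity
  refine mul_left_cancel₀ (mul_ne_zero (pow_ne_zero 2 n_ne_zero) q_succ_ne_zero) ?_
  have moment_one := moment 0
  rw [zero_add] at moment_one
  simp only [pow_one] at moment_one
  rw [scaledLambda]
  linear_combination (q + 1) * expansion + moment 3 + (112 - 28 * n) * moment 2
    + (2464 - 1540 * n + 210 * n ^ 2) * moment 1
    + (8448 - 11872 * n + 4200 * n ^ 2 - 420 * n ^ 3) * moment_one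

lemma card_blocksThrough_eight [Algebra (ZMod 2) F]
    (hq : Nat.card (fixedPoints (σ.trans σ)) = Nat.card (fixedPoints σ) ^ 2) {u v : F}
    (huv : u ≠ v) :
    720 * (#(blocksThrough σ 8 u v) : ℤ) =
      scaledLambda (Fintype.card F) (Nat.card (fixedPoints σ)) := by
  have : CharP F 2 := charP_of_injective_algebraMap (algebraMap (ZMod 2) F).injective 2
  have double_count := congrArg (Nat.cast : ℕ → ℤ)
    (card_blocksThrough_mul (σ := σ) (k := 8) (by decide) huv)
  have block_count := card_blocks_eight (traceSign_isPrimitive F) (traceSign_ringEquiv F σ) hq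
  push_cast [Nat.cast_sub (Nat.le_mul_self _)] at double_count
  have n_gt_one : (1 : ℤ) < Fintype.card F := Nat.one_lt_cast.2 Fintype.one_lt_card
  refine mul_left_cancel₀ (mul_ne_zero (zero_lt_one.trans n_gt_one).ne'
    (sub_ne_zero.2 n_gt_one.ne')) ?_
  linear_combination 720 * double_count + block_count

end BlockCount

lemma gcd_add_self_of_two_mul_gcd_dvd {m e : ℕ} (hd : 2 * m.gcd e ∣ m) :
    m.gcd (e + e) = m.gcd e * 2 := by
  rw [← mul_two]
  refine Nat.dvd_antisymm ?_ (Nat.dvd_gcd ?_ ?_)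
  · exact (Nat.gcd_mul_right_dvd_mul_gcd m e 2).trans
      (Nat.mul_dvd_mul_left _ (Nat.gcd_dvd_right m 2))
  · rwa [mul_comm]
  · exact Nat.mul_dvd_mul_right (Nat.gcd_dvd_right m e) 2

section FrobeniusFixedPoints

open Function

variable {F : Type*} [Field F] [Finite F] (p : ℕ) [Fact p.Prime] [CharP F p]

lemma card_fixedPoints_iterateFrobeniusEquiv {m : ℕ} (hF : Nat.card F = p ^ m) (e : ℕ) :
    Nat.card (fixedPoints (iterateFrobeniusEquiv F p e)) = p ^ m.gcd e := by
  have p_pos : 0 < p := (Fact.out : p.Prime).pos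
  have fixed_eq : fixedPoints (iterateFrobeniusEquiv F p e) =
      insert 0 (Units.val '' ((powMonoidHom (p ^ e - 1) : Fˣ →* Fˣ).ker : Set Fˣ)) := by
    ext x
    have pow_eq : x ^ p ^ e = x * x ^ (p ^ e - 1) := by
      rw [← pow_succ', Nat.sub_add_cancel (Nat.pow_pos p_pos)]
    rw [mem_fixedPoints, IsFixedPt, iterateFrobeniusEquiv_def, pow_eq, Set.mem_insert_iff]
    rcases eq_or_ne x 0 with rfl | hx
    · simp
    · lift x to Fˣ using hx.isUnit
      rw [Units.val_injective.mem_set_image, SetLike.mem_coe, MonoidHom.mem_ker, Units.ext_iff]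
      simp
  have card_units : Nat.card Fˣ = p ^ m - 1 := by rw [Nat.card_units, hF]
  have zero_notMem :
      (0 : F) ∉ Units.val '' ((powMonoidHom (p ^ e - 1) : Fˣ →* Fˣ).ker : Set Fˣ) := by
    rintro ⟨u, -, hu⟩
    exact u.ne_zero hu
  rw [Nat.card_coe_set_eq, fixed_eq, Set.ncard_insert_of_notMem zero_notMem,
    Set.ncard_image_of_injective _ Units.val_injective, ← Nat.card_coe_set_eq,
    SetLike.coe_sort_coe, IsCyclic.card_powMonoidHom_ker, card_units,
    Nat.pow_sub_one_gcd_pow_sub_one, Nat.sub_add_cancel (Nat.pow_pos p_pos)]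

lemma card_fixedPoints_iterateFrobeniusEquiv_trans_self {m e : ℕ} (hF : Nat.card F = p ^ m)
    (hd : 2 * m.gcd e ∣ m) :
    Nat.card (fixedPoints ((iterateFrobeniusEquiv F p e).trans (iterateFrobeniusEquiv F p e))) =
      Nat.card (fixedPoints (iterateFrobeniusEquiv F p e)) ^ 2 := by
  have trans_self : (iterateFrobeniusEquiv F p e).trans (iterateFrobeniusEquiv F p e) =
      iterateFrobeniusEquiv F p (e + e) := by
    ext x
    exact (iterateFrobeniusEquiv_add_apply F p e e x).symm
  rw [trans_self, card_fixedPoints_iterateFrobeniusEquiv p hF,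
    card_fixedPoints_iterateFrobeniusEquiv p hF, gcd_add_self_of_two_mul_gcd_dvd hd, pow_mul]

end FrobeniusFixedPoints

section Code

open Function

section MinimalPolynomials

lemma orderOf_eq_of_isConjRoot {K L : Type*} [Field K] [Ring L] [Algebra K L] {x y : L}
    (h : IsConjRoot K x y) : orderOf x = orderOf y := by
  refine orderOf_eq_orderOf_iff.2 fun n => ?_
  have pow_eq_one_iff (z : L) : z ^ n = 1 ↔ minpoly K z ∣ X ^ n - 1 := by
    rw [minpoly.dvd_iff, map_sub, map_pow, aeval_X, map_one, sub_eq_zero]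
  rw [pow_eq_one_iff, pow_eq_one_iff, isConjRoot_def.1 h]

lemma isCoprime_minpoly_of_orderOf_ne {K L : Type*} [Field K] [Ring L] [IsDomain L] [Algebra K L]
    {x y : L} (hx : IsIntegral K x) (hy : IsIntegral K y) (h : orderOf x ≠ orderOf y) :
    IsCoprime (minpoly K x) (minpoly K y) := by
  refine ((dvd_or_isCoprime _ _ (minpoly.irreducible hy)).resolve_left fun hdvd => h ?_).symm
  exact orderOf_eq_of_isConjRoot ((minpoly.eq_iff_aeval_eq_zero (minpoly.irreducible hx)
    (minpoly.monic hx)).2 (minpoly.dvd_iff.1 hdvd))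

lemma not_coprime_two_pow_sub_one_one_add_two_pow {m e : ℕ} (hm : 0 < m)
    (hd : 2 * m.gcd e ∣ m) : ¬ (2 ^ m - 1).Coprime (1 + 2 ^ e) := by
  intro hcop
  have factor : 2 ^ (e + e) - 1 = (1 + 2 ^ e) * (2 ^ e - 1) := by
    rw [← mul_two, pow_mul, add_comm 1]
    exact Nat.sq_sub_sq (2 ^ e) 1
  have gcd_eq : 2 ^ m.gcd (e + e) - 1 = 2 ^ m.gcd e - 1 := by
    rw [← Nat.pow_sub_one_gcd_pow_sub_one, ← Nat.pow_sub_one_gcd_pow_sub_one, factor,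
      hcop.symm.gcd_mul_left_cancel_right]
  have pow_eq : 2 ^ m.gcd (e + e) = 2 ^ m.gcd e :=
    Nat.sub_one_cancel (by positivity) (by positivity) gcd_eq
  have gcd_pos := Nat.gcd_pos_of_pos_left e hm
  have := Nat.pow_right_injective le_rfl pow_eq
  rw [gcd_add_self_of_two_mul_gcd_dvd hd] at this
  omega

lemma gE_dvd_iff {m e : ℕ} (hm : 0 < m) (hd : 2 * m.gcd e ∣ m) {α : GaloisField 2 m}
    (hα : orderOf α = 2 ^ m - 1) {p : (ZMod 2)[X]} :
    gE m e α ∣ p ↔ aeval α p = 0 ∧ aeval (α ^ (1 + 2 ^ e)) p = 0 := by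
  have orderOf_ne : orderOf α ≠ orderOf (α ^ (1 + 2 ^ e)) := by
    have order_pos : 2 ^ m - 1 ≠ 0 := (Nat.sub_pos_of_lt (Nat.one_lt_two_pow hm.ne')).ne'
    rw [orderOf_pow' α (by positivity), hα, Ne, eq_comm, Nat.div_eq_self, not_or]
    exact ⟨order_pos, not_coprime_two_pow_sub_one_one_add_two_pow hm hd⟩
  have coprime : IsCoprime (minpoly (ZMod 2) α) (minpoly (ZMod 2) (α ^ (1 + 2 ^ e))) :=
    isCoprime_minpoly_of_orderOf_ne (Algebra.IsIntegral.isIntegral α)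
      (Algebra.IsIntegral.isIntegral _) orderOf_ne
  rw [gE, ← minpoly.dvd_iff, ← minpoly.dvd_iff]
  exact ⟨fun h => ⟨dvd_of_mul_right_dvd h, dvd_of_mul_left_dvd h⟩, fun h => coprime.mul_dvd h.1 h.2⟩

end MinimalPolynomials

section BinaryVectors

variable {ι : Type*} [Fintype ι]

lemma sum_smul_eq_sum_filter_ne_zero {M : Type*} [AddCommGroup M] [Module (ZMod 2) M]
    (c : ι → ZMod 2) (g : ι → M) : ∑ i, c i • g i = ∑ i with c i ≠ 0, g i := by
  have eq_one_of_ne_zero : ∀ a : ZMod 2, a ≠ 0 → a = 1 := by decide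
  rw [sum_filter]
  refine sum_congr rfl fun i _ => ?_
  split_ifs with h
  · rw [eq_one_of_ne_zero _ h, one_smul]
  · rw [not_not.1 h, zero_smul]

lemma sum_eq_hammingNorm (c : ι → ZMod 2) : ∑ i, c i = hammingNorm c := by
  simpa [hammingNorm] using sum_smul_eq_sum_filter_ne_zero c fun _ => (1 : ZMod 2)

lemma filter_ne_zero_injective :
    Injective fun c : ι → ZMod 2 => univ.filter fun i => c i ≠ 0 := by
  intro c d h
  have eq_of_ne_zero_iff : ∀ a b : ZMod 2, (a ≠ 0 ↔ b ≠ 0) → a = b := by decide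
  exact funext fun i => eq_of_ne_zero_iff _ _ (by simpa using Finset.ext_iff.1 h i)

end BinaryVectors

section PointSets

variable {F : Type*} [Field F] {n : ℕ}

/-- The point of `F` labelling a coordinate of an extended cyclic code of length `n`: the powers
of `α` in order, and `0` for the last coordinate, the parity check. -/
def coordPoint (α : F) (i : Fin n) : F :=
  if (i : ℕ) < n - 1 then α ^ (i : ℕ) else 0

lemma coordPoint_injective (hn : 1 < n) {α : F} (hα : orderOf α = n - 1) :
    Injective (coordPoint α : Fin n → F) := by
  have α_ne_zero : α ≠ 0 := by
    rintro rfl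
    rw [orderOf_zero] at hα
    omega
  intro i j h
  simp only [coordPoint] at h
  split_ifs at h with hi hj hj
  · exact Fin.ext (pow_injOn_Iio_orderOf (hα ▸ hi) (hα ▸ hj) h)
  · exact absurd h (pow_ne_zero _ α_ne_zero)
  · exact absurd h.symm (pow_ne_zero _ α_ne_zero)
  · omega

lemma aeval_codePoly_castLE [Algebra (ZMod 2) F] (α : F) {k : ℕ} (hk : k ≠ 0)
    (c : Fin n → ZMod 2) :
    aeval (α ^ k) (codePoly fun i : Fin (n - 1) => c (Fin.castLE (Nat.sub_le _ _) i)) =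
      ∑ i with c i ≠ 0, coordPoint α i ^ k := by
  rw [← sum_smul_eq_sum_filter_ne_zero, codePoly, map_sum]
  refine Fintype.sum_of_injective (Fin.castLE (Nat.sub_le n 1)) (Fin.castLE_injective _) _ _
    (fun i hi => ?_) fun i => ?_
  · rw [Fin.range_castLE, Set.mem_ofPred_eq] at hi
    rw [coordPoint, if_neg hi, zero_pow hk, smul_zero]
  · rw [coordPoint, Fin.val_castLE, if_pos i.2, map_mul, aeval_C, map_pow, aeval_X,
      Algebra.smul_def, pow_right_comm]

variable [DecidableEq F]

/-- The support of a vector, as a set of points of `F`. -/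
def pointSet (α : F) (c : Fin n → ZMod 2) : Finset F :=
  (univ.filter fun i => c i ≠ 0).image (coordPoint α)

lemma pointSet_bijective [Fintype F] (hn : 1 < n) {α : F} (hα : orderOf α = n - 1)
    (hF : Fintype.card F = n) : Bijective (pointSet α : (Fin n → ZMod 2) → Finset F) := by
  refine (Fintype.bijective_iff_injective_and_card _).2 ⟨?_, ?_⟩
  · exact Injective.comp (image_injective (coordPoint_injective hn hα)) filter_ne_zero_injective
  · simp [hF]

lemma card_pointSet (hn : 1 < n) {α : F} (hα : orderOf α = n - 1) (c : Fin n → ZMod 2) :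
    #(pointSet α c) = hammingNorm c :=
  card_image_of_injective _ (coordPoint_injective hn hα)

lemma sum_pointSet (hn : 1 < n) {α : F} (hα : orderOf α = n - 1) (c : Fin n → ZMod 2)
    (f : F → F) : ∑ x ∈ pointSet α c, f x = ∑ i with c i ≠ 0, f (coordPoint α i) :=
  sum_image (coordPoint_injective hn hα).injOn

lemma coordPoint_mem_pointSet (hn : 1 < n) {α : F} (hα : orderOf α = n - 1)
    {c : Fin n → ZMod 2} {i : Fin n} : coordPoint α i ∈ pointSet α c ↔ c i ≠ 0 := by
  rw [pointSet, (coordPoint_injective hn hα).mem_finset_image, mem_filter_univ]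

end PointSets

section Design

variable {m e : ℕ} {α : GaloisField 2 m} [Fintype (GaloisField 2 m)]
  [DecidableEq (GaloisField 2 m)]

lemma pointSet_mem_blocks (hm : 0 < m) (hd : 2 * m.gcd e ∣ m) (hα : orderOf α = 2 ^ m - 1)
    {k : ℕ} (hk : Even k) {c : Fin (2 ^ m) → ZMod 2} :
    pointSet α c ∈ blocks (iterateFrobeniusEquiv (GaloisField 2 m) 2 e) k ↔
      c ∈ CEbar m e α ∧ hammingNorm c = k := by
  have n_gt_one : 1 < 2 ^ m := Nat.one_lt_two_pow hm.ne'
  have parity (hc : hammingNorm c = k) : ∑ i, c i = 0 := by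
    rw [sum_eq_hammingNorm, hc, (ZMod.natCast_eq_zero_iff_even).2 hk]
  have aeval_one := aeval_codePoly_castLE α one_ne_zero c
  have aeval_pow := aeval_codePoly_castLE α (k := 1 + 2 ^ e) (by positivity) c
  simp only [pow_one, pow_add] at aeval_one aeval_pow
  rw [mem_blocks, card_pointSet n_gt_one hα, sum_pointSet n_gt_one hα, sum_pointSet n_gt_one hα,
    CEbar, Set.mem_ofPred_eq, CE, Set.mem_ofPred_eq, gE_dvd_iff hm hd hα]
  simp only [iterateFrobeniusEquiv_def, pow_add, pow_one, aeval_one, aeval_pow]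
  tauto

lemma ncard_codewords_through (hm : 0 < m) (hd : 2 * m.gcd e ∣ m) (hα : orderOf α = 2 ^ m - 1)
    {k : ℕ} (hk : Even k) (i j : Fin (2 ^ m)) :
    {c | c ∈ CEbar m e α ∧ hammingNorm c = k ∧ ∀ l ∈ ({i, j} : Finset (Fin (2 ^ m))),
      c l ≠ 0}.ncard =
      #(blocksThrough (iterateFrobeniusEquiv (GaloisField 2 m) 2 e) k (coordPoint α i)
        (coordPoint α j)) := by
  have n_gt_one : 1 < 2 ^ m := Nat.one_lt_two_pow hm.ne'
  have card_field : Fintype.card (GaloisField 2 m) = 2 ^ m := by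
    rw [Fintype.card_eq_nat_card, GaloisField.card 2 m hm.ne']
  have bijective := pointSet_bijective n_gt_one hα card_field
  rw [← Set.ncard_coe_finset, ← Set.ncard_preimage_of_injective_subset_range bijective.injective
    (bijective.surjective.range_eq ▸ Set.subset_univ _)]
  congr 1
  ext c
  rw [Set.mem_preimage, mem_coe, blocksThrough, mem_filter, pointSet_mem_blocks hm hd hα hk,
    coordPoint_mem_pointSet n_gt_one hα, coordPoint_mem_pointSet n_gt_one hα, Set.mem_ofPred_eq,
    forall_mem_insert, and_assoc]
  simp

end Design

end Code

theorem design_weight_eight_general {m e : ℕ} (hm : 0 < m) (hd : 2 * m.gcd e ∣ m)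
    {α : GaloisField 2 m} (hα : orderOf α = 2 ^ m - 1) {T : Finset (Fin (2 ^ m))}
    (hT : #T = 2) :
    720 * ({c : Fin (2 ^ m) → ZMod 2 |
        c ∈ CEbar m e α ∧ hammingNorm c = 8 ∧ ∀ i ∈ T, c i ≠ 0}.ncard : ℤ) =
      scaledLambda (2 ^ m) (2 ^ m.gcd e) := by
  classical
  have : Fintype (GaloisField 2 m) := Fintype.ofFinite _
  have card_field : Nat.card (GaloisField 2 m) = 2 ^ m := GaloisField.card 2 m hm.ne'
  obtain ⟨i, j, hij, rfl⟩ := card_eq_two.1 hT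
  have points_ne : coordPoint α i ≠ coordPoint α j :=
    (coordPoint_injective (Nat.one_lt_two_pow hm.ne') hα).ne hij
  rw [ncard_codewords_through hm hd hα (by decide),
    card_blocksThrough_eight (card_fixedPoints_iterateFrobeniusEquiv_trans_self 2 card_field hd)
      points_ne,
    card_fixedPoints_iterateFrobeniusEquiv 2 card_field, Fintype.card_eq_nat_card, card_field]
  push_cast
  rfl

/-- For `m ≡ 0 (mod 4)` (with `m ≥ 4`) and `2 ≤ e ≤ ⌊m/2⌋` with
`gcd(m,e) = 2`, the supports of the weight-8 codewords of `C̄_E` form a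
`2-(2^m, 8, λ)` design with
`λ = (2^{4m−4} − 27·2^{3m−4} + 23·2^{2m−1} + 261·2^{m−2} + 403)/45`. -/
theorem design_weight_eight
    (m e : ℕ) (hm4 : m % 4 = 0) (hm : 4 ≤ m)
    (he2 : 2 ≤ e) (heM : 2 * e ≤ m) (hgcd : Nat.gcd m e = 2)
    (α : GaloisField 2 m) (hα : orderOf α = 2 ^ m - 1) :
    ∀ T : Finset (Fin (2 ^ m)), T.card = 2 →
      (45 : ℤ) * {c : Fin (2 ^ m) → ZMod 2 |
        c ∈ CEbar m e α ∧ hammingNorm c = 8 ∧ ∀ i ∈ T, c i ≠ 0}.ncard =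
      2 ^ (4 * m - 4) - 27 * 2 ^ (3 * m - 4) + 23 * 2 ^ (2 * m - 1)
        + 261 * 2 ^ (m - 2) + 403 := by
  intro T hT
  have count := design_weight_eight_general (e := e) (by omega) (by rw [hgcd]; omega) hα hT
  rw [hgcd, show (2 : ℤ) ^ 2 = 4 by norm_num, scaledLambda_two_pow_four hm] at count
  linarith
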